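/- arXiv:2507.10828 — 3 statements merged into one kernel-verified Lean document; each statement's English description precedes it below -/
import Mathlib

section
/- Let d ≥ 1 and k ≥ 0 be integers, let w ∈ [2]^∞, and let S ⊆ [2]^∞ satisfy dist(a,b) ≤ d for all a,b ∈ S. Suppose S_k = {a ∈ S : dist(a,w) = k} is finite and nonempty, let N = |S_k|, and for each coordinate i ∈ ℕ let c_i = |{a ∈ S_k : a_i ≠ w_i}| (only finitely many c_i are nonzero). Then ∑_i c_i = k·N and ∑_i c_i² ≥ (k − d/2)·N² (as real numbers). -/
/-- Hamming distance between infinite words over `Fin n`, as an extended natural number. -/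
noncomputable def hDist (n : ℕ) (a b : ℕ → Fin n) : ℕ∞ := {i | a i ≠ b i}.encard

/-- The `r`-ball around `a`. -/
def hBall (n : ℕ) (a : ℕ → Fin n) (r : ℕ) : Set (ℕ → Fin n) := {x | hDist n x a ≤ (r : ℕ∞)}

/-- `S` is `d`-maximal: it has diameter `d` and any point within distance `d`
of all of `S` already belongs to `S`. -/
def IsDMaximal (n d : ℕ) (S : Set (ℕ → Fin n)) : Prop :=
  (∀ a ∈ S, ∀ b ∈ S, hDist n a b ≤ (d : ℕ∞)) ∧
  (∃ a ∈ S, ∃ b ∈ S, hDist n a b = (d : ℕ∞)) ∧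
  (∀ x : ℕ → Fin n, (∀ s ∈ S, hDist n x s ≤ (d : ℕ∞)) → x ∈ S)

/-- `S` contains an `r`-ball. -/
def ContainsBall (n : ℕ) (S : Set (ℕ → Fin n)) (r : ℕ) : Prop :=
  ∃ a, hBall n a r ⊆ S

/-! Write `D a` for the set of coordinates where `a` and `w` differ, so that `c i` counts the words
`a` with `i ∈ D a`. Double counting the pairs `(a, i)` and the triples `(a, b, i)` with `i ∈ D a`,
respectively `i ∈ D a ∩ D b`, gives `∑ c i = ∑ |D a|` and `∑ (c i)² = ∑ |D a ∩ D b|`. Two words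
differ at every coordinate of the symmetric difference of `D a` and `D b`, hence
`2 |D a ∩ D b| = |D a| + |D b| - |D a ∆ D b| ≥ 2 * k - d` for each of the `N²` pairs. -/

open scoped symmDiff

section DoubleCounting

variable {ι κ : Type*} {F : Finset κ} {s : κ → Set ι}

theorem finsum_ncard_setOf_mem_eq_sum_ncard (hs : ∀ a ∈ F, (s a).Finite) :
    ∑ᶠ i, {a ∈ (F : Set κ) | i ∈ s a}.ncard = ∑ a ∈ F, (s a).ncard := by
  classical
  have hcount (i : ι) : {a ∈ (F : Set κ) | i ∈ s a}.ncard = ∑ a ∈ F, (s a).indicator 1 i := by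
    have hfilter : {a ∈ (F : Set κ) | i ∈ s a} = (F.filter (i ∈ s ·) : Finset κ) :=
      (Finset.coe_filter _ F).symm
    rw [hfilter, Set.ncard_coe_finset, Finset.card_filter]
    rfl
  have hcard (a : κ) : (s a).ncard = ∑ᶠ i, (s a).indicator 1 i := by
    rw [← finsum_mem_def, ← finsum_one]
    rfl
  simp only [hcount, hcard]
  exact finsum_sum_comm F _ fun a ha ↦ (hs a ha).subset Set.support_indicator_subset

theorem finsum_sq_ncard_setOf_mem_eq_sum_ncard_inter (hs : ∀ a ∈ F, (s a).Finite) :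
    ∑ᶠ i, {a ∈ (F : Set κ) | i ∈ s a}.ncard ^ 2 = ∑ a ∈ F, ∑ b ∈ F, (s a ∩ s b).ncard := by
  have hpairs (i : ι) : {a ∈ (F : Set κ) | i ∈ s a}.ncard ^ 2 =
      {p ∈ ((F ×ˢ F : Finset (κ × κ)) : Set (κ × κ)) | i ∈ s p.1 ∩ s p.2}.ncard := by
    rw [sq, ← Set.ncard_prod]
    congr 1
    ext p
    simp only [Set.mem_prod, Set.mem_ofPred_eq, Finset.mem_coe, Finset.mem_product,
      Set.mem_inter_iff]
    tauto
  simp only [hpairs]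
  rw [finsum_ncard_setOf_mem_eq_sum_ncard, Finset.sum_product]
  exact fun p hp ↦ (hs p.1 (Finset.mem_product.1 hp).1).inter_of_left _

end DoubleCounting

theorem ncard_add_ncard_eq_two_mul_ncard_inter_add_ncard_symmDiff {ι : Type*} {s t : Set ι}
    (hs : s.Finite) (ht : t.Finite) :
    s.ncard + t.ncard = 2 * (s ∩ t).ncard + (s ∆ t).ncard := by
  have hst := Set.ncard_inter_add_ncard_sdiff_eq_ncard s t hs
  have hts := Set.ncard_inter_add_ncard_sdiff_eq_ncard t s ht
  have hsymm : (s ∆ t).ncard = (s \ t).ncard + (t \ s).ncard :=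
    Set.ncard_union_eq disjoint_sdiff_sdiff hs.sdiff ht.sdiff
  rw [Set.inter_comm] at hts
  lia

section Words

variable {ι : Type*} {α : ι → Type*}

theorem symmDiff_setOf_ne_subset (a b w : ∀ i, α i) :
    {i | a i ≠ w i} ∆ {i | b i ≠ w i} ⊆ {i | a i ≠ b i} := by
  rintro i (⟨ha, hb⟩ | ⟨hb, ha⟩) hab
  · exact hb fun hbw ↦ ha (hab.trans hbw)
  · exact ha fun haw ↦ hb (hab.symm.trans haw)

theorem two_mul_le_two_mul_ncard_inter_add {d k : ℕ} {a b w : ∀ i, α i}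
    (ha : {i | a i ≠ w i}.encard = k) (hb : {i | b i ≠ w i}.encard = k)
    (hab : {i | a i ≠ b i}.encard ≤ d) :
    2 * k ≤ 2 * ({i | a i ≠ w i} ∩ {i | b i ≠ w i}).ncard + d := by
  have hsymm : ({i | a i ≠ w i} ∆ {i | b i ≠ w i}).ncard ≤ d :=
    ENat.toNat_le_of_le_natCast ((Set.encard_le_encard (symmDiff_setOf_ne_subset a b w)).trans hab)
  have hsum := ncard_add_ncard_eq_two_mul_ncard_inter_add_ncard_symmDiff
    (Set.finite_of_encard_eq_coe ha) (Set.finite_of_encard_eq_coe hb)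
  have hka : {i | a i ≠ w i}.ncard = k := congrArg ENat.toNat ha
  have hkb : {i | b i ≠ w i}.ncard = k := congrArg ENat.toNat hb
  lia

variable {d k : ℕ} {w : ∀ i, α i} {A : Set (∀ i, α i)}

theorem finsum_ncard_setOf_ne_eq_mul_ncard (hA : A.Finite)
    (hk : ∀ a ∈ A, {i | a i ≠ w i}.encard = k) :
    ∑ᶠ i, {a ∈ A | a i ≠ w i}.ncard = k * A.ncard := by
  lift A to Finset (∀ i, α i) using hA
  calc ∑ᶠ i, {a ∈ (A : Set (∀ i, α i)) | a i ≠ w i}.ncard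
      = ∑ a ∈ A, {i | a i ≠ w i}.ncard :=
        finsum_ncard_setOf_mem_eq_sum_ncard fun a ha ↦ Set.finite_of_encard_eq_coe (hk a ha)
    _ = ∑ _a ∈ A, k := Finset.sum_congr rfl fun a ha ↦ congrArg ENat.toNat (hk a ha)
    _ = k * (A : Set (∀ i, α i)).ncard := by
        rw [Finset.sum_const, smul_eq_mul, Set.ncard_coe_finset, mul_comm]

-- Moving `d` to the right and clearing the factor `1 / 2` keeps the inequality inside `ℕ`.
theorem two_mul_mul_sq_ncard_le_finsum_sq_ncard_setOf_ne (hA : A.Finite)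
    (hk : ∀ a ∈ A, {i | a i ≠ w i}.encard = k)
    (hd : ∀ a ∈ A, ∀ b ∈ A, {i | a i ≠ b i}.encard ≤ d) :
    2 * k * A.ncard ^ 2 ≤ 2 * ∑ᶠ i, {a ∈ A | a i ≠ w i}.ncard ^ 2 + d * A.ncard ^ 2 := by
  lift A to Finset (∀ i, α i) using hA
  have hsq : ∑ᶠ i, {a ∈ (A : Set (∀ i, α i)) | a i ≠ w i}.ncard ^ 2 =
      ∑ a ∈ A, ∑ b ∈ A, ({i | a i ≠ w i} ∩ {i | b i ≠ w i}).ncard :=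
    finsum_sq_ncard_setOf_mem_eq_sum_ncard_inter fun a ha ↦ Set.finite_of_encard_eq_coe (hk a ha)
  rw [hsq, Set.ncard_coe_finset]
  calc 2 * k * A.card ^ 2
      = ∑ a ∈ A, ∑ b ∈ A, 2 * k := by simp only [Finset.sum_const, smul_eq_mul]; ring
    _ ≤ ∑ a ∈ A, ∑ b ∈ A, (2 * ({i | a i ≠ w i} ∩ {i | b i ≠ w i}).ncard + d) :=
        Finset.sum_le_sum fun a ha ↦ Finset.sum_le_sum fun b hb ↦
          two_mul_le_two_mul_ncard_inter_add (hk a ha) (hk b hb) (hd a ha b hb)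
    _ = 2 * ∑ a ∈ A, ∑ b ∈ A, ({i | a i ≠ w i} ∩ {i | b i ≠ w i}).ncard + d * A.card ^ 2 := by
        simp only [Finset.sum_add_distrib, Finset.mul_sum, Finset.sum_const, smul_eq_mul]; ring

theorem stmt17_general (hA : A.Finite) (hk : ∀ a ∈ A, {i | a i ≠ w i}.encard = k)
    (hd : ∀ a ∈ A, ∀ b ∈ A, {i | a i ≠ b i}.encard ≤ d) :
    ∑ᶠ i, {a ∈ A | a i ≠ w i}.ncard = k * A.ncard ∧
      ((k : ℝ) - (d : ℝ) / 2) * (A.ncard : ℝ) ^ 2 ≤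
        ∑ᶠ i, ({a ∈ A | a i ≠ w i}.ncard : ℝ) ^ 2 := by
  refine ⟨finsum_ncard_setOf_ne_eq_mul_ncard hA hk, ?_⟩
  have hcast : ((∑ᶠ i, {a ∈ A | a i ≠ w i}.ncard ^ 2 : ℕ) : ℝ) =
      ∑ᶠ i, ({a ∈ A | a i ≠ w i}.ncard : ℝ) ^ 2 := by
    simp only [← Nat.cast_pow]
    exact (Nat.castAddMonoidHom ℝ).map_finsum_of_injective Nat.cast_injective _
  have hnat : (2 * k * A.ncard ^ 2 : ℝ) ≤
      2 * (∑ᶠ i, {a ∈ A | a i ≠ w i}.ncard ^ 2 : ℕ) + d * A.ncard ^ 2 :=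
    mod_cast two_mul_mul_sq_ncard_le_finsum_sq_ncard_setOf_ne hA hk hd
  rw [← hcast]
  linarith

end Words

theorem stmt17 (d k : ℕ) (hd : 1 ≤ d) (w : ℕ → Fin 2) (S : Set (ℕ → Fin 2))
    (hdiam : ∀ a ∈ S, ∀ b ∈ S, hDist 2 a b ≤ (d : ℕ∞))
    (Sk : Set (ℕ → Fin 2)) (hSk : Sk = {a ∈ S | hDist 2 a w = (k : ℕ∞)})
    (hfin : Sk.Finite) (hne : Sk.Nonempty)
    (N : ℕ) (hN : N = Sk.ncard)
    (c : ℕ → ℕ) (hc : ∀ i, c i = {a ∈ Sk | a i ≠ w i}.ncard) :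
    (∑ᶠ i, c i = k * N) ∧
      ((k : ℝ) - (d : ℝ) / 2) * (N : ℝ) ^ 2 ≤ ∑ᶠ i, ((c i : ℝ)) ^ 2 := by
  obtain rfl : c = fun i ↦ {a ∈ Sk | a i ≠ w i}.ncard := funext hc
  subst hSk hN
  exact stmt17_general hfin (fun a ha ↦ ha.2) fun a ha b hb ↦ hdiam a ha.1 b hb.1
end

section
/- Let d ≥ 1 be an integer, let S ⊆ [2]^∞ be a d-maximal set that contains no 1-ball, let w ∈ S, and let k be an integer with 0 ≤ k ≤ d such that S_k = {a ∈ S : dist(a,w) = k} is nonempty (S_k is finite since S is). Let N = |S_k|, c_i = |{a ∈ S_k : a_i ≠ w_i}|, let ℓ ≥ 1 be an integer, and suppose Δ := ∑_{i=1}^{ℓ} (c_i/N − 1/2) satisfies Δ ≥ 0. Then |S_k| ≤ binom(2d, k)·(1 + Δ/ℓ)^{−Δ} (as real numbers, with a real exponent). -/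
/-!
Record a word `a ∈ S` by the finite set of coordinates where it differs from `w`. This gives a
family `P ∋ ∅` of sets at pairwise distance at most `d`, and since `S` is maximal without a
`1`-ball, every finite set `x` is at distance at least `d` from some `B ∈ P`. Every `A ∈ P`
containing `x` must then meet `B \ x` in a large proportion of its points, so double counting over
`B \ x` and induction on `k - |x|` show that at most
`(2d - |x|).choose (k - |x|) ≤ (2d).choose k / 2 ^ |x|` sets of size `k` in `P` contain `x`.
Summing over the `t`-subsets `x` of a coordinate set of size `ℓ` bounds the `t`-th factorial moment
of the number of these coordinates where a random element of `S_k` differs from `w`. The mean of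
this number is `ℓ / 2 + Δ`, so Jensen's inequality bounds the same moment from below, and
`t = ⌈Δ⌉` gives the theorem.
-/

open Finset
open scoped symmDiff

theorem two_pow_mul_choose_le {n k t : ℕ} (h : 2 * k + t ≤ n) :
    2 ^ t * n.choose k ≤ (n + t).choose (k + t) := by
  induction t with
  | zero => simp
  | succ t ih =>
    refine Nat.le_of_mul_le_mul_right ?_ (Nat.succ_pos (k + t))
    calc 2 ^ (t + 1) * n.choose k * (k + t + 1)
        = 2 * (k + t + 1) * (2 ^ t * n.choose k) := by ring
      _ ≤ (n + t + 1) * (n + t).choose (k + t) := Nat.mul_le_mul (by lia) (ih (by lia))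
      _ = (n + t + 1).choose (k + t + 1) * (k + t + 1) := Nat.add_one_mul_choose_eq _ _

theorem card_mul_descPochhammer_eval_le_sum_descFactorial {β : Type*} {F : Finset β} {v : β → ℕ}
    {M : ℝ} {t : ℕ} (hM : (#F : ℝ) * M = ∑ A ∈ F, (v A : ℝ)) (ht : (t : ℝ) - 1 ≤ M) :
    (#F : ℝ) * (descPochhammer ℝ t).eval M ≤ ∑ A ∈ F, ((v A).descFactorial t : ℝ) := by
  rcases F.eq_empty_or_nonempty with rfl | hF
  · simp
  rcases eq_or_ne t 0 with rfl | ht0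
  · simp
  have hcard : (0 : ℝ) < #F := by exact_mod_cast hF.card_pos
  have hmean : ∑ A ∈ F, (#F : ℝ)⁻¹ * v A = M := by
    rw [← mul_sum, ← hM, inv_mul_cancel_left₀ hcard.ne']
  have hjensen := descPochhammer_eval_le_sum_descFactorial ht0 v (fun _ ↦ (#F : ℝ)⁻¹) (t := F)
    (fun _ _ ↦ by positivity) (by simp [hcard.ne']) (by rwa [hmean])
  rwa [hmean, ← mul_sum, ← div_eq_inv_mul, le_div_iff₀' hcard] at hjensen

theorem pow_mul_descPochhammer_eval_le {K : Type*} [Field K] [LinearOrder K]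
    [IsStrictOrderedRing K] {l D : K} {t : ℕ} (hl : 0 < l) (hD : 0 ≤ D)
    (htD : (t : K) - 1 ≤ D) (htl : (t : K) - 1 ≤ l) :
    (1 + D / l) ^ t * (descPochhammer K t).eval l ≤
      2 ^ t * (descPochhammer K t).eval (l / 2 + D) := by
  simp only [descPochhammer_eval_eq_prod_range, pow_eq_prod_const, ← prod_mul_distrib]
  have hlast {i : ℕ} (hi : i ∈ range t) : (i : K) ≤ t - 1 := by
    have : (i : K) + 1 ≤ t := by exact_mod_cast mem_range.1 hi
    linarith
  refine prod_le_prod (fun i hi ↦ ?_) (fun i hi ↦ ?_)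
  · exact mul_nonneg (by positivity) (by linarith [hlast hi])
  · have hfactor : (1 + D / l) * (l - i) = l - i + D - D / l * i := by
      field_simp
      ring
    have hnonneg : 0 ≤ D / l * i := by positivity
    linarith [hlast hi]

theorem le_mul_rpow_neg_of_mul_pow_ceil_le {a b x D : ℝ} (ha : 0 ≤ a) (hx : 1 ≤ x)
    (h : a * x ^ ⌈D⌉₊ ≤ b) : a ≤ b * x ^ (-D) := by
  have hx0 : 0 < x := zero_lt_one.trans_le hx
  rw [Real.rpow_neg hx0.le, ← div_eq_mul_inv, le_div_iff₀ (Real.rpow_pos_of_pos hx0 _)]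
  calc a * x ^ D ≤ a * x ^ (⌈D⌉₊ : ℝ) := by gcongr; exact Nat.le_ceil D
    _ = a * x ^ ⌈D⌉₊ := by rw [Real.rpow_natCast]
    _ ≤ b := h

section SetFamily

variable {α : Type*} [DecidableEq α] {d k : ℕ} {P : Set (Finset α)} {F : Finset (Finset α)}

theorem card_symmDiff (A B : Finset α) : #(A ∆ B) = #(A \ B) + #(B \ A) :=
  card_union_of_disjoint disjoint_sdiff_sdiff

theorem sum_card_inter_eq_sum_card_filter_mem (F : Finset (Finset α)) (I : Finset α) :
    ∑ A ∈ F, #(I ∩ A) = ∑ i ∈ I, #{A ∈ F | i ∈ A} := by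
  simp only [← filter_mem_eq_inter]
  exact sum_card_bipartiteAbove_eq_sum_card_bipartiteBelow (fun A i ↦ i ∈ A)

theorem card_mul_le_of_forall_mul_card_le {Y : Finset α} (hY : Y.Nonempty) {c r N : ℕ}
    (hinter : ∀ A ∈ F, c * #Y ≤ #(Y ∩ A) * r) (hdegree : ∀ i ∈ Y, #{A ∈ F | i ∈ A} ≤ N) :
    #F * c ≤ N * r := by
  refine Nat.le_of_mul_le_mul_right ?_ hY.card_pos
  calc #F * c * #Y = #F * (c * #Y) := mul_assoc _ _ _
    _ ≤ ∑ A ∈ F, #(Y ∩ A) * r := F.card_nsmul_le_sum _ _ hinter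
    _ = (∑ i ∈ Y, #{A ∈ F | i ∈ A}) * r := by
        rw [← sum_mul, sum_card_inter_eq_sum_card_filter_mem]
    _ ≤ #Y * N * r := by
        gcongr
        exact sum_le_card_nsmul _ _ _ hdegree
    _ = N * r * #Y := by ring

theorem sum_choose_card_inter_eq_sum_card_filter_subset (F : Finset (Finset α)) (I : Finset α)
    (t : ℕ) :
    ∑ A ∈ F, (#(I ∩ A)).choose t = ∑ x ∈ powersetCard t I, #{A ∈ F | x ⊆ A} := by
  have hchoose (A : Finset α) : (#(I ∩ A)).choose t = #{x ∈ powersetCard t I | x ⊆ A} := by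
    rw [← card_powersetCard]
    congr 1
    grind
  simp only [hchoose]
  exact sum_card_bipartiteAbove_eq_sum_card_bipartiteBelow (fun A x : Finset α ↦ x ⊆ A)

/-- Under the distance `#(A ∆ B)` on finite sets, the family `P` has diameter at most `d` and
no ball of radius less than `d` around a finite set contains it. This is what a maximal set of words
without a `1`-ball becomes when its words are recorded by their differences from one of them. -/
structure IsDiametral (d : ℕ) (P : Set (Finset α)) : Prop where
  card_symmDiff_le : ∀ A ∈ P, ∀ B ∈ P, #(A ∆ B) ≤ d
  exists_le_card_symmDiff : ∀ x, ∃ B ∈ P, d ≤ #(x ∆ B)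

theorem card_sdiff_mul_card_sdiff_le {x A B : Finset α} (hxA : x ⊆ A) (hB : #B ≤ d)
    (hAB : #(A ∆ B) ≤ d) (hxB : d ≤ #(x ∆ B)) :
    #(A \ x) * #(B \ x) ≤ #((B \ x) ∩ A) * (2 * d - #x) := by
  rw [card_symmDiff] at hAB hxB
  have hA_sdiff : #(A \ B) = #(x \ B) + #((A \ x) \ B) := by
    rw [← card_union_of_disjoint (by grind [disjoint_left])]
    congr 1
    grind
  have hA : #(A \ x) = #((B \ x) ∩ A) + #((A \ x) \ B) := by
    rw [← card_union_of_disjoint (by grind [disjoint_left])]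
    congr 1
    grind
  have hB' : #(B \ x) = #((B \ x) ∩ A) + #(B \ A) := by
    rw [← card_union_of_disjoint (by grind [disjoint_left])]
    congr 1
    grind
  have hxsplit := card_sdiff_add_card_inter x B
  have hBsplit := card_sdiff_add_card_inter B x
  rw [inter_comm] at hBsplit
  rw [hA, hB']
  set u := #((B \ x) ∩ A)
  set v := #((A \ x) \ B)
  set q := #(B \ A)
  have hvu : v ≤ u := by lia
  have hroom : u + v + 2 * q ≤ 2 * d - #x := by lia
  calc (u + v) * (u + q) = u * (u + v) + u * q + v * q := by ring
    _ ≤ u * (u + v) + u * q + u * q := by gcongr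
    _ = u * (u + v + 2 * q) := by ring
    _ ≤ u * (2 * d - #x) := by gcongr

namespace IsDiametral

theorem card_le (hP : IsDiametral d P) (hempty : ∅ ∈ P) {A : Finset α} (hA : A ∈ P) : #A ≤ d := by
  simpa [card_symmDiff] using hP.card_symmDiff_le A hA ∅ hempty

theorem card_le_choose_of_forall_subset (hP : IsDiametral d P) (hempty : ∅ ∈ P) {n : ℕ}
    {x : Finset α} (hFP : ∀ A ∈ F, A ∈ P) (hFcard : ∀ A ∈ F, #A = #x + n)
    (hFx : ∀ A ∈ F, x ⊆ A) : #F ≤ (2 * d - #x).choose n := by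
  induction n generalizing x F with
  | zero =>
    have hx (A) (hA : A ∈ F) : x = A := eq_of_subset_of_card_le (hFx A hA) (hFcard A hA).le
    rw [Nat.choose_zero_right, card_le_one]
    exact fun A hA B hB ↦ (hx A hA).symm.trans (hx B hB)
  | succ n ih =>
    rcases F.eq_empty_or_nonempty with rfl | ⟨A₀, hA₀⟩
    · simp
    have hxd : #x < d := by
      have := hP.card_le hempty (hFP A₀ hA₀)
      have := hFcard A₀ hA₀
      lia
    obtain ⟨B, hBP, hxB⟩ := hP.exists_le_card_symmDiff x
    have hnonempty : (B \ x).Nonempty := by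
      rw [← card_pos]
      have := card_le_card (sdiff_subset : x \ B ⊆ x)
      rw [card_symmDiff] at hxB
      lia
    have hmeet (A) (hA : A ∈ F) : (n + 1) * #(B \ x) ≤ #((B \ x) ∩ A) * (2 * d - #x) := by
      have hsize : #(A \ x) = n + 1 := by
        rw [card_sdiff_of_subset (hFx A hA), hFcard A hA, Nat.add_sub_cancel_left]
      rw [← hsize]
      exact card_sdiff_mul_card_sdiff_le (hFx A hA) (hP.card_le hempty hBP)
        (hP.card_symmDiff_le A (hFP A hA) B hBP) hxB
    have hlink (i) (hi : i ∈ B \ x) : #{A ∈ F | i ∈ A} ≤ (2 * d - #x - 1).choose n := by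
      have hcard : #(insert i x) = #x + 1 := card_insert_of_notMem (mem_sdiff.1 hi).2
      rw [Nat.sub_sub, ← hcard]
      exact ih (by grind) (by grind) (by grind)
    have hchoose := Nat.add_one_mul_choose_eq (2 * d - #x - 1) n
    rw [Nat.sub_add_cancel (by lia)] at hchoose
    refine Nat.le_of_mul_le_mul_right ?_ n.succ_pos
    calc #F * (n + 1) ≤ (2 * d - #x - 1).choose n * (2 * d - #x) :=
          card_mul_le_of_forall_mul_card_le hnonempty hmeet hlink
      _ = (2 * d - #x).choose (n + 1) * (n + 1) := by rw [mul_comm, hchoose]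

theorem two_pow_mul_card_filter_subset_le (hP : IsDiametral d P) (hempty : ∅ ∈ P)
    (hFP : ∀ A ∈ F, A ∈ P) (hFk : ∀ A ∈ F, #A = k) (x : Finset α) :
    2 ^ #x * #{A ∈ F | x ⊆ A} ≤ (2 * d).choose k := by
  rcases ({A ∈ F | x ⊆ A} : Finset _).eq_empty_or_nonempty with hnone | ⟨A, hA⟩
  · simp [hnone]
  obtain ⟨hAF, hxA⟩ := mem_filter.1 hA
  have hkd : k ≤ d := hFk A hAF ▸ hP.card_le hempty (hFP A hAF)
  obtain ⟨n, rfl⟩ : ∃ n, k = #x + n := Nat.exists_eq_add_of_le (hFk A hAF ▸ card_le_card hxA)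
  calc 2 ^ #x * #{A ∈ F | x ⊆ A} ≤ 2 ^ #x * (2 * d - #x).choose n := by
        gcongr
        exact hP.card_le_choose_of_forall_subset hempty (by grind) (by grind) (by grind)
    _ ≤ (2 * d - #x + #x).choose (n + #x) := two_pow_mul_choose_le (by lia)
    _ = (2 * d).choose (#x + n) := by rw [Nat.sub_add_cancel (by lia), add_comm]

theorem finite_setOf_card_eq (hP : IsDiametral d P) (hempty : ∅ ∈ P) (k : ℕ) :
    {A ∈ P | #A = k}.Finite := by
  by_contra hinf
  obtain ⟨F, hF, hcard⟩ := Set.Infinite.exists_subset_card_eq hinf ((2 * d).choose k + 1)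
  have := hP.two_pow_mul_card_filter_subset_le hempty (fun A hA ↦ (hF hA).1)
    (fun A hA ↦ (hF hA).2) ∅
  simp only [card_empty, pow_zero, empty_subset, filter_true, one_mul] at this
  lia

theorem two_pow_mul_sum_descFactorial_le (hP : IsDiametral d P) (hempty : ∅ ∈ P)
    (hFP : ∀ A ∈ F, A ∈ P) (hFk : ∀ A ∈ F, #A = k) (I : Finset α) (t : ℕ) :
    2 ^ t * ∑ A ∈ F, (#(I ∩ A)).descFactorial t ≤ (#I).descFactorial t * (2 * d).choose k := by
  have hlevel (x) (hx : x ∈ powersetCard t I) :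
      2 ^ t * #{A ∈ F | x ⊆ A} ≤ (2 * d).choose k := by
    rw [← (mem_powersetCard.1 hx).2]
    exact hP.two_pow_mul_card_filter_subset_le hempty hFP hFk x
  have hchoose : 2 ^ t * ∑ A ∈ F, (#(I ∩ A)).choose t ≤ (#I).choose t * (2 * d).choose k := by
    rw [sum_choose_card_inter_eq_sum_card_filter_subset, mul_sum, ← card_powersetCard]
    exact sum_le_card_nsmul _ _ _ hlevel
  simp only [Nat.descFactorial_eq_factorial_mul_choose, ← mul_sum]
  calc 2 ^ t * (t.factorial * ∑ A ∈ F, (#(I ∩ A)).choose t)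
      = t.factorial * (2 ^ t * ∑ A ∈ F, (#(I ∩ A)).choose t) := by ring
    _ ≤ t.factorial * ((#I).choose t * (2 * d).choose k) := by gcongr
    _ = t.factorial * (#I).choose t * (2 * d).choose k := by ring

theorem card_mul_pow_le_choose (hP : IsDiametral d P) (hempty : ∅ ∈ P)
    (hFP : ∀ A ∈ F, A ∈ P) (hFk : ∀ A ∈ F, #A = k) {I : Finset α} (hI : I.Nonempty) {D : ℝ}
    (hD : 0 ≤ D) (hmean : (#F : ℝ) * (#I / 2 + D) = ∑ A ∈ F, (#(I ∩ A) : ℝ)) {t : ℕ}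
    (htD : (t : ℝ) - 1 ≤ D) (htI : (t : ℝ) - 1 < #I) :
    (#F : ℝ) * (1 + D / #I) ^ t ≤ (2 * d).choose k := by
  have hIpos : (0 : ℝ) < #I := by exact_mod_cast hI.card_pos
  have hmoment : (2 : ℝ) ^ t * ∑ A ∈ F, ((#(I ∩ A)).descFactorial t : ℝ) ≤
      (#I).descFactorial t * (2 * d).choose k := by
    exact_mod_cast hP.two_pow_mul_sum_descFactorial_le hempty hFP hFk I t
  refine le_of_mul_le_mul_right ?_ (descPochhammer_pos htI)
  calc (#F : ℝ) * (1 + D / #I) ^ t * (descPochhammer ℝ t).eval (#I : ℝ)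
      ≤ #F * (2 ^ t * (descPochhammer ℝ t).eval (#I / 2 + D)) := by
        rw [mul_assoc]
        gcongr #F * ?_
        exact pow_mul_descPochhammer_eval_le hIpos hD htD htI.le
    _ = 2 ^ t * (#F * (descPochhammer ℝ t).eval (#I / 2 + D)) := by ring
    _ ≤ 2 ^ t * ∑ A ∈ F, ((#(I ∩ A)).descFactorial t : ℝ) := by
        gcongr
        exact card_mul_descPochhammer_eval_le_sum_descFactorial hmean (by linarith)
    _ ≤ (#I).descFactorial t * (2 * d).choose k := hmoment
    _ = (2 * d).choose k * (descPochhammer ℝ t).eval (#I : ℝ) := by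
        rw [descPochhammer_eval_eq_descFactorial, mul_comm]

theorem card_le_choose_mul_rpow (hP : IsDiametral d P) (hempty : ∅ ∈ P)
    (hFP : ∀ A ∈ F, A ∈ P) (hFk : ∀ A ∈ F, #A = k) (hF : F.Nonempty) {I : Finset α}
    (hI : I.Nonempty) {D : ℝ} (hD : 0 ≤ D)
    (hmean : (#F : ℝ) * (#I / 2 + D) = ∑ A ∈ F, (#(I ∩ A) : ℝ)) :
    (#F : ℝ) ≤ (2 * d).choose k * (1 + D / #I) ^ (-D) := by
  have hFpos : (0 : ℝ) < #F := by exact_mod_cast hF.card_pos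
  have hDI : #I / 2 + D ≤ #I := by
    refine le_of_mul_le_mul_left ?_ hFpos
    rw [hmean, ← nsmul_eq_mul]
    exact sum_le_card_nsmul _ _ _ fun A _ ↦ by exact_mod_cast card_le_card inter_subset_left
  have hceil := Nat.ceil_lt_add_one hD
  refine le_mul_rpow_neg_of_mul_pow_ceil_le hFpos.le ?_ ?_
  · exact le_add_of_nonneg_right (by positivity)
  · exact hP.card_mul_pow_le_choose hempty hFP hFk hI hD hmean (by linarith)
      (by linarith [(#I).cast_nonneg (α := ℝ)])

end IsDiametral

end SetFamily

section Words

/-- The set of coordinates where two words differ; its `encard` is their Hamming distance, for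
words indexed by an arbitrary type. -/
def disagreementSet {ι β : Type*} (a b : ι → β) : Set ι := {i | a i ≠ b i}

theorem hDist_triangle {n : ℕ} (a b c : ℕ → Fin n) : hDist n a c ≤ hDist n a b + hDist n b c := by
  refine (Set.encard_le_encard fun i hac ↦ ?_).trans (Set.encard_union_le _ _)
  by_contra! hi
  simp_all

theorem IsDMaximal.exists_le_hDist {n d : ℕ} {S : Set (ℕ → Fin n)} (hS : IsDMaximal n d S)
    (hball : ¬ ContainsBall n S 1) (x : ℕ → Fin n) : ∃ b ∈ S, (d : ℕ∞) ≤ hDist n x b := by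
  by_contra! hclose
  refine hball ⟨x, fun y hy ↦ hS.2.2 y fun b hb ↦ ?_⟩
  calc hDist n y b ≤ hDist n y x + hDist n x b := hDist_triangle y x b
    _ ≤ 1 + hDist n x b := by gcongr; exact_mod_cast hy
    _ = hDist n x b + 1 := add_comm _ _
    _ ≤ d := Order.add_one_le_of_lt (hclose b hb)

variable {ι : Type*} [DecidableEq ι]

/-- The word obtained from `w` by changing exactly the letters at the coordinates in `A`; it
identifies the finite sets of coordinates with the words at finite distance from `w`. -/
def flipOn (w : ι → Fin 2) (A : Finset ι) : ι → Fin 2 := fun i ↦ if i ∈ A then w i + 1 else w i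

theorem disagreementSet_flipOn_flipOn (w : ι → Fin 2) (A B : Finset ι) :
    disagreementSet (flipOn w A) (flipOn w B) = ↑(A ∆ B) := by
  ext i
  have : w i + 1 ≠ w i := by lia
  by_cases hA : i ∈ A <;> by_cases hB : i ∈ B <;>
    simp [disagreementSet, flipOn, Set.mem_symmDiff, hA, hB, this]

@[simp]
theorem flipOn_empty (w : ι → Fin 2) : flipOn w ∅ = w := by
  ext
  simp [flipOn]

theorem disagreementSet_flipOn (w : ι → Fin 2) (A : Finset ι) :
    disagreementSet (flipOn w A) w = A := by
  simpa [symmDiff_def] using disagreementSet_flipOn_flipOn w A ∅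

theorem flipOn_apply_ne_iff {w : ι → Fin 2} {A : Finset ι} {i : ι} :
    flipOn w A i ≠ w i ↔ i ∈ A :=
  Set.ext_iff.1 (disagreementSet_flipOn w A) i

theorem flipOn_injective (w : ι → Fin 2) : Function.Injective (flipOn w) := fun A B h ↦ by
  rw [← coe_inj, ← disagreementSet_flipOn w A, h, disagreementSet_flipOn]

theorem exists_flipOn_eq {w a : ι → Fin 2} (h : (disagreementSet a w).Finite) :
    ∃ A, flipOn w A = a := by
  refine ⟨h.toFinset, funext fun i ↦ ?_⟩
  by_cases hi : a i = w i
  · simp [flipOn, disagreementSet, hi]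
  · have : w i + 1 = a i := by lia
    simp [flipOn, disagreementSet, hi, this]

theorem encard_disagreementSet_flipOn_flipOn (w : ι → Fin 2) (A B : Finset ι) :
    (disagreementSet (flipOn w A) (flipOn w B)).encard = #(A ∆ B) := by
  rw [disagreementSet_flipOn_flipOn, Set.encard_coe_eq_coe_finsetCard]

theorem ncard_image_flipOn (w : ι → Fin 2) (F : Finset (Finset ι)) :
    (flipOn w '' F).ncard = #F := by
  rw [Set.ncard_image_of_injective _ (flipOn_injective w), Set.ncard_coe_finset]

theorem ncard_sep_image_flipOn (w : ι → Fin 2) (F : Finset (Finset ι)) (i : ι) :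
    {a ∈ flipOn w '' F | a i ≠ w i}.ncard = #{A ∈ F | i ∈ A} := by
  rw [← ncard_image_flipOn w]
  congr 1
  ext a
  constructor
  · rintro ⟨⟨A, hA, rfl⟩, hi⟩
    exact ⟨A, by simpa using ⟨hA, flipOn_apply_ne_iff.1 hi⟩, rfl⟩
  · rintro ⟨A, hA, rfl⟩
    have hA' := mem_filter.1 (mem_coe.1 hA)
    exact ⟨⟨A, hA'.1, rfl⟩, flipOn_apply_ne_iff.2 hA'.2⟩

theorem isDiametral_preimage_flipOn {d : ℕ} {S : Set (ι → Fin 2)}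
    (hdiam : ∀ a ∈ S, ∀ b ∈ S, (disagreementSet a b).encard ≤ d)
    (hfar : ∀ x, ∃ b ∈ S, d ≤ (disagreementSet x b).encard) {w : ι → Fin 2} (hw : w ∈ S) :
    IsDiametral d (flipOn w ⁻¹' S) where
  card_symmDiff_le A hA B hB := by
    have := hdiam _ hA _ hB
    rw [encard_disagreementSet_flipOn_flipOn] at this
    exact_mod_cast this
  exists_le_card_symmDiff x := by
    obtain ⟨b, hbS, hxb⟩ := hfar (flipOn w x)
    obtain ⟨B, rfl⟩ := exists_flipOn_eq (Set.finite_of_encard_le_coe (hdiam b hbS w hw))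
    rw [encard_disagreementSet_flipOn_flipOn] at hxb
    exact ⟨B, hbS, by exact_mod_cast hxb⟩

end Words

theorem stmt18_general {ι : Type*} {d k : ℕ} {S : Set (ι → Fin 2)}
    (hdiam : ∀ a ∈ S, ∀ b ∈ S, (disagreementSet a b).encard ≤ d)
    (hfar : ∀ x, ∃ b ∈ S, d ≤ (disagreementSet x b).encard) {w : ι → Fin 2} (hw : w ∈ S)
    {T : Set (ι → Fin 2)} (hT : T ⊆ {a ∈ S | (disagreementSet a w).encard = k})
    (hTne : T.Nonempty) {I : Finset ι} (hI : I.Nonempty) {Δ : ℝ}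
    (hΔ : Δ = ∑ i ∈ I, (({a ∈ T | a i ≠ w i}.ncard : ℝ) / T.ncard - 1 / 2)) (hΔ0 : 0 ≤ Δ) :
    (T.ncard : ℝ) ≤ (2 * d).choose k * (1 + Δ / #I) ^ (-Δ) := by
  classical
  have hP := isDiametral_preimage_flipOn hdiam hfar hw
  have hempty : ∅ ∈ flipOn w ⁻¹' S := by simpa using hw
  have hTimage : T ⊆ flipOn w '' {A ∈ flipOn w ⁻¹' S | #A = k} := fun a ha ↦ by
    obtain ⟨haS, hak⟩ := hT ha
    obtain ⟨A, rfl⟩ := exists_flipOn_eq (Set.finite_of_encard_eq_coe hak)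
    rw [disagreementSet_flipOn, Set.encard_coe_eq_coe_finsetCard] at hak
    exact ⟨A, ⟨haS, by exact_mod_cast hak⟩, rfl⟩
  obtain ⟨U, hU, rfl⟩ := Set.subset_image_iff.1 hTimage
  lift U to Finset (Finset ι) using (hP.finite_setOf_card_eq hempty k).subset hU with F
  have hF : F.Nonempty := by simpa using hTne
  simp only [ncard_sep_image_flipOn, ncard_image_flipOn] at hΔ ⊢
  refine hP.card_le_choose_mul_rpow hempty (fun A hA ↦ (hU hA).1) (fun A hA ↦ (hU hA).2) hF hI
    hΔ0 ?_
  have hcount : ∑ A ∈ F, (#(I ∩ A) : ℝ) = ∑ i ∈ I, (#{A ∈ F | i ∈ A} : ℝ) := by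
    exact_mod_cast sum_card_inter_eq_sum_card_filter_mem F I
  rw [hcount, hΔ, sum_sub_distrib, ← sum_div, sum_const, nsmul_eq_mul]
  field_simp
  ring

theorem stmt18 (d : ℕ) (hd : 1 ≤ d) (S : Set (ℕ → Fin 2))
    (hmax : IsDMaximal 2 d S) (hball : ¬ ContainsBall 2 S 1)
    (w : ℕ → Fin 2) (hw : w ∈ S) (k : ℕ) (hk : k ≤ d)
    (Sk : Set (ℕ → Fin 2)) (hSk : Sk = {a ∈ S | hDist 2 a w = (k : ℕ∞)})
    (hne : Sk.Nonempty)
    (N : ℕ) (hN : N = Sk.ncard)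
    (c : ℕ → ℕ) (hc : ∀ i, c i = {a ∈ Sk | a i ≠ w i}.ncard)
    (ℓ : ℕ) (hℓ : 1 ≤ ℓ)
    (Δ : ℝ) (hΔ : Δ = ∑ i ∈ Finset.range ℓ, ((c i : ℝ) / (N : ℝ) - 1 / 2))
    (hΔ0 : 0 ≤ Δ) :
    (Sk.ncard : ℝ) ≤ ((2 * d).choose k : ℝ) * (1 + Δ / (ℓ : ℝ)) ^ (-Δ) := by
  subst hN
  simp only [hc] at hΔ
  simpa using stmt18_general hmax.1 (hmax.exists_le_hDist hball) hw hSk.subset hne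
    (nonempty_range_iff.2 (Nat.one_le_iff_ne_zero.1 hℓ)) hΔ hΔ0
end

section
/- Let n and d be integers with 1 ≤ d < n. Then every subset S ⊆ {0,1}^n of diameter at most d (i.e., any two elements differ in at most d coordinates) has size |S| ≤ 2^{n·H(d/(2n)) + 1}, where H(x) = −x·log₂(x) − (1−x)·log₂(1−x) is the binary entropy function. -/
/-- The binary entropy function `H(x) = -x·log₂ x - (1-x)·log₂(1-x)`. -/
noncomputable def binEnt (x : ℝ) : ℝ :=
  -x * Real.logb 2 x - (1 - x) * Real.logb 2 (1 - x)

/-!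
Split the set into its words of even and of odd weight. Within each part the nonzero distances are
even, so they lie in the set `L` of the `⌊d/2⌋` positive even numbers up to `d`. To each word `b`
attach the function `x ↦ ∏ l ∈ L, (dist(x, b) - l)`, a polynomial of degree at most `|L|` in the
bits of `x` which vanishes at all other words of the part but not at `b`. These functions are
linearly independent, so the part has at most `∑ i ≤ |L|, n.choose i` words, the number of
multilinear monomials of degree at most `|L|`. A Chernoff-type estimate bounds this sum by
`2 ^ (n * H(d / (2n)))`.
-/

open Finset

theorem linearIndependent_of_apply_eq_zero {ι α R : Type*} [CommRing R] [NoZeroDivisors R]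
    {f : ι → α → R} (p : ι → α) (hdiag : ∀ i, f i (p i) ≠ 0)
    (hoff : Pairwise fun i j ↦ f j (p i) = 0) : LinearIndependent R f := by
  refine linearIndependent_iff'.mpr fun s c hc i hi ↦ ?_
  have heval : ∑ j ∈ s, c j * f j (p i) = 0 := by simpa using congrFun hc (p i)
  rw [sum_eq_single_of_mem i hi fun j _ hji ↦ by rw [hoff hji.symm, mul_zero]] at heval
  exact (mul_eq_zero.mp heval).resolve_right (hdiag i)

theorem card_filter_card_le {ι : Type*} [Fintype ι] (t : ℕ) :
    #{A : Finset ι | #A ≤ t} = ∑ i ∈ range (t + 1), (Fintype.card ι).choose i := by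
  rw [card_eq_sum_card_fiberwise (f := card) (t := range (t + 1))
    fun A hA ↦ by simpa [Nat.lt_succ_iff] using hA]
  refine sum_congr rfl fun i hi ↦ ?_
  have hslice : ({A ∈ {A : Finset ι | #A ≤ t} | #A = i} : Finset _) = powersetCard i univ := by
    ext A
    simp only [mem_filter, mem_univ, true_and, mem_powersetCard_univ, mem_range] at hi ⊢
    lia
  rw [hslice, card_powersetCard, card_univ]

section LowDegree

variable {ι : Type*} (R : Type*) [CommRing R]

/-- The multilinear monomial `∏ i ∈ A, xᵢ`, as a function on the cube `{0,1}^ι` with values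
in `R`. -/
def cubeMonomial (A : Finset ι) (x : ι → Fin 2) : R := ∏ i ∈ A, ((x i : ℕ) : R)

/-- The functions on the cube `{0,1}^ι` that are polynomials of degree at most `t` in the bits.
Since `xᵢ² = xᵢ` on the cube, multilinear monomials span them. -/
def lowDegree (t : ℕ) : Submodule R ((ι → Fin 2) → R) :=
  Submodule.span R (cubeMonomial R '' {A | #A ≤ t})

variable {R}

theorem cubeMonomial_mem_lowDegree {A : Finset ι} {t : ℕ} (hA : #A ≤ t) :
    cubeMonomial R A ∈ lowDegree R t :=
  Submodule.subset_span ⟨A, hA, rfl⟩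

theorem one_mem_lowDegree (t : ℕ) : (1 : (ι → Fin 2) → R) ∈ lowDegree R t := by
  have hone : cubeMonomial R (∅ : Finset ι) = 1 := by
    funext x
    exact prod_empty
  exact hone ▸ cubeMonomial_mem_lowDegree (by simp)

theorem cubeMonomial_mul [DecidableEq ι] (A B : Finset ι) :
    cubeMonomial R A * cubeMonomial R B = cubeMonomial R (A ∪ B) := by
  funext x
  have hidem (i : ι) : ((x i : ℕ) : R) * (x i : ℕ) = (x i : ℕ) := by
    generalize x i = y
    fin_cases y <;> simp
  have habsorb : (∏ i ∈ A ∪ B, ((x i : ℕ) : R)) * ∏ i ∈ A ∩ B, ((x i : ℕ) : R) =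
      ∏ i ∈ A ∪ B, ((x i : ℕ) : R) := by
    rw [← prod_sdiff (inter_subset_union (s := A) (t := B)), mul_assoc, ← prod_mul_distrib]
    simp only [hidem]
  exact prod_union_inter.symm.trans habsorb

theorem mul_mem_lowDegree {s t : ℕ} {f g : (ι → Fin 2) → R} (hf : f ∈ lowDegree R s)
    (hg : g ∈ lowDegree R t) : f * g ∈ lowDegree R (s + t) := by
  classical
  suffices hle : lowDegree R s * lowDegree R t ≤ lowDegree (ι := ι) R (s + t) from
    hle (Submodule.mul_mem_mul hf hg)
  rw [lowDegree, lowDegree, Submodule.span_mul_span, Submodule.span_le]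
  rintro _ ⟨_, ⟨A, hA, rfl⟩, _, ⟨B, hB, rfl⟩, rfl⟩
  simp only [cubeMonomial_mul]
  exact cubeMonomial_mem_lowDegree ((card_union_le A B).trans (add_le_add hA hB))

theorem prod_mem_lowDegree {κ : Type*} (s : Finset κ) {f : κ → (ι → Fin 2) → R}
    (hf : ∀ k ∈ s, f k ∈ lowDegree R 1) : ∏ k ∈ s, f k ∈ lowDegree R #s := by
  induction s using Finset.cons_induction with
  | empty => exact one_mem_lowDegree 0
  | cons k s hk ih =>
    rw [prod_cons, card_cons, add_comm]
    exact mul_mem_lowDegree (hf k (mem_cons_self k s)) (ih fun j hj ↦ hf j (mem_cons_of_mem hj))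

variable [Fintype ι]

theorem finrank_lowDegree_le [Nontrivial R] (t : ℕ) :
    Module.finrank R (lowDegree (ι := ι) R t) ≤
      ∑ i ∈ range (t + 1), (Fintype.card ι).choose i := by
  classical
  have hspan : lowDegree (ι := ι) R t =
      Submodule.span R (({A : Finset ι | #A ≤ t} : Finset _).image (cubeMonomial R) : Set _) := by
    simp [lowDegree]
  rw [hspan, ← card_filter_card_le]
  exact (finrank_span_finset_le_card _).trans card_image_le

theorem natCast_hammingDist (x b : ι → Fin 2) :
    (hammingDist x b : R) = ∑ i, ((b i : ℕ) + (1 - 2 * (b i : ℕ)) * (x i : ℕ) : R) := by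
  rw [hammingDist, card_filter, Nat.cast_sum]
  refine sum_congr rfl fun i _ ↦ ?_
  generalize x i = y
  generalize b i = z
  fin_cases y <;> fin_cases z <;> norm_num

theorem hammingDist_mem_lowDegree (b : ι → Fin 2) :
    (fun x ↦ (hammingDist x b : R)) ∈ lowDegree R 1 := by
  have hlinear : (fun x ↦ (hammingDist x b : R)) =
      ∑ i, (((b i : ℕ) : R) • 1 + (1 - 2 * ((b i : ℕ) : R)) • cubeMonomial R {i}) := by
    funext x
    simp [natCast_hammingDist, cubeMonomial]
  rw [hlinear]
  exact sum_mem fun i _ ↦ add_mem (Submodule.smul_mem _ _ (one_mem_lowDegree 1))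
    (Submodule.smul_mem _ _ (cubeMonomial_mem_lowDegree (card_singleton i).le))

end LowDegree

section DistancePolynomial

variable {ι : Type*} [Fintype ι] (R : Type*) [CommRing R]

/-- The function `x ↦ ∏ l ∈ L, (dist(x, b) - l)` on the cube, which detects the words whose
distance from `b` lies in `L`. -/
def distancePolynomial (L : Finset ℕ) (b : ι → Fin 2) : (ι → Fin 2) → R :=
  ∏ l ∈ L, fun x ↦ (hammingDist x b : R) - l

variable {R}

theorem distancePolynomial_mem_lowDegree (L : Finset ℕ) (b : ι → Fin 2) :
    distancePolynomial R L b ∈ lowDegree R #L :=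
  prod_mem_lowDegree L fun l _ ↦ by
    have hconst : (fun _ ↦ (l : R)) ∈ lowDegree (ι := ι) R 1 := by
      simpa [Pi.smul_def] using Submodule.smul_mem _ (l : R) (one_mem_lowDegree 1)
    exact sub_mem (hammingDist_mem_lowDegree b) hconst

theorem distancePolynomial_apply_eq_zero_iff [IsDomain R] [CharZero R] {L : Finset ℕ}
    {b x : ι → Fin 2} : distancePolynomial R L b x = 0 ↔ hammingDist x b ∈ L := by
  simp [distancePolynomial, prod_eq_zero_iff, sub_eq_zero]

end DistancePolynomial

section Codes

variable {ι : Type*} [Fintype ι]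

theorem card_le_sum_choose_of_pairwise_hammingDist_mem {L : Finset ℕ} (hL : 0 ∉ L)
    {C : Finset (ι → Fin 2)} (hC : (C : Set (ι → Fin 2)).Pairwise fun a b ↦ hammingDist a b ∈ L) :
    #C ≤ ∑ i ∈ range (#L + 1), (Fintype.card ι).choose i := by
  have hindep : LinearIndependent ℚ fun b : C ↦ distancePolynomial ℚ L b.1 :=
    linearIndependent_of_apply_eq_zero Subtype.val
      (fun b ↦ by rwa [ne_eq, distancePolynomial_apply_eq_zero_iff, hammingDist_self])
      (fun a b hab ↦ distancePolynomial_apply_eq_zero_iff.mpr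
        (hC a.2 b.2 (Subtype.coe_ne_coe.mpr hab)))
  have hspan : Submodule.span ℚ (Set.range fun b : C ↦ distancePolynomial ℚ L b.1) ≤
      lowDegree ℚ #L :=
    Submodule.span_le.mpr (Set.range_subset_iff.mpr fun b ↦ distancePolynomial_mem_lowDegree L b.1)
  calc #C = Module.finrank ℚ (Submodule.span ℚ (Set.range fun b : C ↦
        distancePolynomial ℚ L b.1)) := by rw [finrank_span_eq_card hindep, Fintype.card_coe]
    _ ≤ Module.finrank ℚ (lowDegree (ι := ι) ℚ #L) := Submodule.finrank_mono hspan
    _ ≤ _ := finrank_lowDegree_le _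

theorem card_le_sum_choose_of_even_hammingDist {d : ℕ} {C : Finset (ι → Fin 2)}
    (heven : ∀ a ∈ C, ∀ b ∈ C, Even (hammingDist a b))
    (hdiam : ∀ a ∈ C, ∀ b ∈ C, hammingDist a b ≤ d) :
    #C ≤ ∑ i ∈ range (d / 2 + 1), (Fintype.card ι).choose i := by
  rw [← Nat.Ioc_filter_dvd_card_eq_div]
  refine card_le_sum_choose_of_pairwise_hammingDist_mem (by simp) fun a ha b hb hab ↦ ?_
  exact mem_filter.mpr ⟨mem_Ioc.mpr ⟨hammingDist_pos.mpr hab, hdiam a ha b hb⟩,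
    (heven a ha b hb).two_dvd⟩

theorem even_hammingDist_iff (a b : ι → Fin 2) :
    Even (hammingDist a b) ↔ (Even (hammingNorm a) ↔ Even (hammingNorm b)) := by
  have hnorm : hammingNorm a + hammingNorm b =
      hammingDist a b + 2 * #{i | a i ≠ 0 ∧ b i ≠ 0} := by
    simp only [hammingNorm, hammingDist, card_filter, mul_sum, ← sum_add_distrib]
    refine sum_congr rfl fun i _ ↦ ?_
    generalize a i = y
    generalize b i = z
    fin_cases y <;> fin_cases z <;> rfl
  rw [← Nat.even_add, hnorm, Nat.even_add]
  simp

theorem card_le_two_mul_sum_choose_of_hammingDist_le {d : ℕ} {C : Finset (ι → Fin 2)}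
    (hdiam : ∀ a ∈ C, ∀ b ∈ C, hammingDist a b ≤ d) :
    #C ≤ 2 * ∑ i ∈ range (d / 2 + 1), (Fintype.card ι).choose i := by
  have hpart (D : Finset (ι → Fin 2)) (hD : D ⊆ C)
      (hparity : ∀ a ∈ D, ∀ b ∈ D, (Even (hammingNorm a) ↔ Even (hammingNorm b))) :
      #D ≤ ∑ i ∈ range (d / 2 + 1), (Fintype.card ι).choose i :=
    card_le_sum_choose_of_even_hammingDist
      (fun a ha b hb ↦ (even_hammingDist_iff a b).mpr (hparity a ha b hb))
      (fun a ha b hb ↦ hdiam a (hD ha) b (hD hb))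
  rw [← card_filter_add_card_filter_not (s := C) fun a ↦ Even (hammingNorm a), two_mul]
  refine add_le_add (hpart _ (filter_subset _ _) fun a ha b hb ↦ ?_)
    (hpart _ (filter_subset _ _) fun a ha b hb ↦ ?_)
  · exact iff_of_true (mem_filter.mp ha).2 (mem_filter.mp hb).2
  · exact iff_of_false (mem_filter.mp ha).2 (mem_filter.mp hb).2

end Codes

section Entropy

open Real

theorem two_rpow_mul_binEnt (a p : ℝ) : (2 : ℝ) ^ (a * binEnt p) = exp (a * binEntropy p) := by
  have hlog : log 2 ≠ 0 := (log_pos one_lt_two).ne'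
  rw [rpow_def_of_pos two_pos, binEnt, binEntropy, log_inv, log_inv, logb, logb]
  congr 1
  field_simp
  ring

theorem exp_neg_mul_binEntropy_le {n k : ℕ} {p : ℝ} (hp₀ : 0 < p) (hp : p ≤ 1 / 2) (hkn : k ≤ n)
    (hk : k ≤ p * n) : exp (-(n * binEntropy p)) ≤ p ^ k * (1 - p) ^ (n - k) := by
  have hq₀ : 0 < 1 - p := by linarith
  have hlog : log p ≤ log (1 - p) := log_le_log hp₀ (by linarith)
  have hexp : p ^ k * (1 - p) ^ (n - k) = exp (k * log p + (n - k) * log (1 - p)) := by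
    rw [exp_add, ← Nat.cast_sub hkn, exp_nat_mul, exp_nat_mul, exp_log hp₀, exp_log hq₀]
  rw [hexp, exp_le_exp, binEntropy, log_inv, log_inv]
  linarith [mul_le_mul_of_nonneg_right hk (sub_nonneg.mpr hlog)]

theorem sum_choose_le_exp_mul_binEntropy {n t : ℕ} {p : ℝ} (hp₀ : 0 < p) (hp : p ≤ 1 / 2)
    (ht : t ≤ p * n) : ∑ i ∈ range (t + 1), (n.choose i : ℝ) ≤ exp (n * binEntropy p) := by
  have hq₀ : 0 ≤ 1 - p := by linarith
  have htn : t ≤ n := by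
    exact_mod_cast ht.trans (mul_le_of_le_one_left n.cast_nonneg (by linarith : p ≤ 1))
  suffices hsum : (∑ i ∈ range (t + 1), (n.choose i : ℝ)) * exp (-(n * binEntropy p)) ≤ 1 by
    rwa [exp_neg, ← div_eq_mul_inv, div_le_one (exp_pos _)] at hsum
  calc (∑ i ∈ range (t + 1), (n.choose i : ℝ)) * exp (-(n * binEntropy p))
      ≤ ∑ i ∈ range (t + 1), p ^ i * (1 - p) ^ (n - i) * n.choose i := by
        rw [sum_mul]
        refine sum_le_sum fun i hi ↦ ?_
        have hit : i ≤ t := Nat.lt_succ_iff.mp (mem_range.mp hi)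
        rw [mul_comm]
        gcongr
        exact exp_neg_mul_binEntropy_le hp₀ hp (hit.trans htn) ((Nat.cast_le.mpr hit).trans ht)
    _ ≤ ∑ i ∈ range (n + 1), p ^ i * (1 - p) ^ (n - i) * n.choose i :=
        sum_le_sum_of_subset_of_nonneg (range_mono (by lia)) fun i _ _ ↦ by positivity
    _ = 1 := by rw [← add_pow, add_sub_cancel, one_pow]

end Entropy

theorem stmt19 (n d : ℕ) (hd : 1 ≤ d) (hdn : d < n)
    (S : Set (Fin n → Fin 2))
    (hdiam : ∀ a ∈ S, ∀ b ∈ S, hammingDist a b ≤ d) :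
    (S.ncard : ℝ) ≤ 2 ^ ((n : ℝ) * binEnt ((d : ℝ) / (2 * (n : ℝ))) + 1) := by
  have hd₀ : (0 : ℝ) < d := by exact_mod_cast hd
  have hdn' : (d : ℝ) < n := by exact_mod_cast hdn
  have hn₀ : (0 : ℝ) < n := hd₀.trans hdn'
  have hcard : S.ncard ≤ 2 * ∑ i ∈ range (d / 2 + 1), n.choose i := by
    rw [Set.ncard_eq_toFinset_card S]
    simpa using card_le_two_mul_sum_choose_of_hammingDist_le (C := S.toFinite.toFinset)
      (by simpa using hdiam)
  have hsum : ∑ i ∈ range (d / 2 + 1), (n.choose i : ℝ) ≤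
      Real.exp (n * Real.binEntropy (d / (2 * n))) := by
    refine sum_choose_le_exp_mul_binEntropy (by positivity) ?_ ?_
    · rw [div_le_div_iff₀ (by positivity) two_pos]
      linarith
    · calc ((d / 2 : ℕ) : ℝ) ≤ d / 2 := Nat.cast_div_le
        _ = d / (2 * n) * n := by field_simp
  calc (S.ncard : ℝ) ≤ 2 * ∑ i ∈ range (d / 2 + 1), (n.choose i : ℝ) := by exact_mod_cast hcard
    _ ≤ 2 * Real.exp (n * Real.binEntropy (d / (2 * n))) := by gcongr
    _ = 2 ^ ((n : ℝ) * binEnt (d / (2 * n)) + 1) := by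
      rw [Real.rpow_add_one two_ne_zero, two_rpow_mul_binEnt, mul_comm]
end
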